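/- The pair (GP, 𝓕) of (Gorenstein (L,A)-projective modules, flat modules) is a left Frobenius pair if and only if R is a left perfect ring (every flat left R-module is projective). -/

import Mathlib

/-!
Fix a complete duality pair `(𝓛, 𝓐)`.

The structural input is a coinductive description of Gorenstein `(𝓛, 𝓐)`-projective modules
(`isGProj_eq_gclass`): they form the largest class `GClass 𝓛` whose members are left Ext-orthogonal
to `𝓛` and embed in a projective module with cokernel again in the class. The cycles of a totally
acyclic complex form such a class, orthogonality being a dimension shift along the complex;
conversely, splicing syzygies and cosyzygies of a member of `GClass 𝓛` yields a totally acyclic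
complex. In this form closure under extensions (`gclass_extension`, via the dual horseshoe
construction), kernels of epimorphisms (`gclass_kernel`) and retracts (`gclass_retract`) follows by
exhibiting, in each case, the cokernel of one embedding into a projective module.

The class `𝓛` contains `R` and is closed under coproducts and summands, hence contains all
projective modules (`projective_mem`), and projective modules are flat (`isFlatMod_of_projective`).

If every flat module is projective, the flat modules are exactly the projective ones, which
cogenerate `GClass 𝓛` by construction and are Ext-injective relative to it
(`extVanish_of_gclass`). Conversely, in a left Frobenius pair a flat module `F` is Gorenstein
projective, so it embeds in a projective module `P` with `P / F` Gorenstein projective; then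
`Ext¹(P / F, F) = 0` splits the embedding (`extend_of_extVanish`), and `F` is projective.
-/

open CategoryTheory CategoryTheory.Limits DirectSum

namespace DualityPaper

variable {R : Type} [Ring R]

/-- The right `R`-module structure on the group of additive maps out of a left `R`-module,
given by `(f • r) m = f (r • m)`. -/
instance charModuleRight (M A : Type) [AddCommGroup M] [AddCommGroup A] [Module R M] :
    Module Rᵐᵒᵖ (M →+ A) where
  smul r f := f.comp (DistribMulAction.toAddMonoidHom M r.unop)
  one_smul f := AddMonoidHom.ext fun m => by
    show f ((1 : Rᵐᵒᵖ).unop • m) = f m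
    simp
  mul_smul r s f := AddMonoidHom.ext fun m => by
    show f ((r * s).unop • m) = f (s.unop • r.unop • m)
    rw [MulOpposite.unop_mul, mul_smul]
  smul_zero r := rfl
  smul_add r f g := rfl
  add_smul r s f := AddMonoidHom.ext fun m => by
    show f ((r + s).unop • m) = f (r.unop • m) + f (s.unop • m)
    rw [MulOpposite.unop_add, add_smul, map_add]
  zero_smul f := AddMonoidHom.ext fun m => by
    show f ((0 : Rᵐᵒᵖ).unop • m) = 0
    simp

/-- The left `R`-module structure on the group of additive maps out of a right `R`-module. -/
instance charModuleLeft (N A : Type) [AddCommGroup N] [AddCommGroup A] [Module Rᵐᵒᵖ N] :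
    Module R (N →+ A) where
  smul r f := f.comp (DistribMulAction.toAddMonoidHom N (MulOpposite.op r))
  one_smul f := AddMonoidHom.ext fun m => by
    show f ((MulOpposite.op (1 : R)) • m) = f m
    simp
  mul_smul r s f := AddMonoidHom.ext fun m => by
    show f (MulOpposite.op (r * s) • m) = f (MulOpposite.op s • MulOpposite.op r • m)
    rw [MulOpposite.op_mul, mul_smul]
  smul_zero r := rfl
  smul_add r f g := rfl
  add_smul r s f := AddMonoidHom.ext fun m => by
    show f (MulOpposite.op (r + s) • m) = f (MulOpposite.op r • m) + f (MulOpposite.op s • m)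
    rw [MulOpposite.op_add, add_smul, map_add]
  zero_smul f := AddMonoidHom.ext fun m => by
    show f (MulOpposite.op (0 : R) • m) = 0
    simp

/-- The character module `M⁺ = Hom_ℤ(M, ℚ/ℤ)` of a left module, as a right module. -/
def charL (M : ModuleCat.{0} R) : ModuleCat.{0} Rᵐᵒᵖ :=
  ModuleCat.of Rᵐᵒᵖ (M →+ AddCircle (1 : ℚ))

/-- The character module `N⁺ = Hom_ℤ(N, ℚ/ℤ)` of a right module, as a left module. -/
def charR (N : ModuleCat.{0} Rᵐᵒᵖ) : ModuleCat.{0} R :=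
  ModuleCat.of R (N →+ AddCircle (1 : ℚ))

/-- A left module over a (possibly noncommutative) ring is flat iff its character module is an
injective right module (Lambek); we take this as the definition of flatness. -/
def IsFlatMod (M : ModuleCat.{0} R) : Prop := CategoryTheory.Injective (charL M)

/-- `f`, `g` form a short exact sequence `0 → A → B → C → 0`. -/
def SES {A B C : ModuleCat.{0} R} (f : A ⟶ B) (g : B ⟶ C) : Prop :=
  ∃ w : f ≫ g = 0, (ShortComplex.mk f g w).ShortExact

/-- Vanishing of `Ext^n_R(M, N)`. -/
def ExtVanish (n : ℕ) (M N : ModuleCat.{0} R) : Prop :=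
  Subsingleton (((_root_.Ext ℤ (ModuleCat.{0} R) n).obj (Opposite.op M)).obj N)

/-- A complete duality pair `(𝓛, 𝓐)` over `R`. -/
structure CompleteDualityPair (𝓛 : Set (ModuleCat.{0} R)) (𝓐 : Set (ModuleCat.{0} Rᵐᵒᵖ)) :
    Prop where
  isoClosed_L : ∀ {M N : ModuleCat.{0} R}, (M ≅ N) → M ∈ 𝓛 → N ∈ 𝓛
  isoClosed_A : ∀ {M N : ModuleCat.{0} Rᵐᵒᵖ}, (M ≅ N) → M ∈ 𝓐 → N ∈ 𝓐
  char_mem_iff : ∀ M : ModuleCat.{0} R, M ∈ 𝓛 ↔ charL M ∈ 𝓐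
  char_mem_iff' : ∀ N : ModuleCat.{0} Rᵐᵒᵖ, N ∈ 𝓐 ↔ charR N ∈ 𝓛
  summands_A : ∀ A ∈ 𝓐, ∀ (B : ModuleCat.{0} Rᵐᵒᵖ) (i : B ⟶ A) (p : A ⟶ B),
    i ≫ p = 𝟙 B → B ∈ 𝓐
  sums_A : ∀ A B : ModuleCat.{0} Rᵐᵒᵖ, A ∈ 𝓐 → B ∈ 𝓐 → ModuleCat.of Rᵐᵒᵖ (A × B) ∈ 𝓐
  summands_L : ∀ L ∈ 𝓛, ∀ (K : ModuleCat.{0} R) (i : K ⟶ L) (p : L ⟶ K),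
    i ≫ p = 𝟙 K → K ∈ 𝓛
  sums_L : ∀ L K : ModuleCat.{0} R, L ∈ 𝓛 → K ∈ 𝓛 → ModuleCat.of R (L × K) ∈ 𝓛
  self_mem : ModuleCat.of R R ∈ 𝓛
  coprod_L : ∀ (ι : Type) (f : ι → ModuleCat.{0} R), (∀ i, f i ∈ 𝓛) →
    ModuleCat.of R (⨁ i, f i) ∈ 𝓛
  ext_L : ∀ {A B C : ModuleCat.{0} R} (f : A ⟶ B) (g : B ⟶ C),
    SES f g → A ∈ 𝓛 → C ∈ 𝓛 → B ∈ 𝓛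

/-- A doubly infinite exact sequence of projectives which stays exact after applying
`Hom_R(-, T)` for every `T` in the class `𝓣`. -/
structure IsTotallyAcyclicWrt (𝓣 : Set (ModuleCat.{0} R))
    (C : ChainComplex (ModuleCat.{0} R) ℤ) : Prop where
  projective : ∀ n, Projective (C.X n)
  exact : ∀ n, (C.sc n).Exact
  homExact : ∀ T ∈ 𝓣, ∀ (n : ℤ) (g : C.X n ⟶ T), C.d (n + 1) n ≫ g = 0 →
    ∃ h : C.X (n - 1) ⟶ T, C.d n (n - 1) ≫ h = g

/-- `M` is Gorenstein projective relative to the class `𝓣`:  it is a kernel in a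
`Hom_R(-, 𝓣)`-exact exact sequence of projective modules. -/
def IsGProj (𝓣 : Set (ModuleCat.{0} R)) (M : ModuleCat.{0} R) : Prop :=
  ∃ C : ChainComplex (ModuleCat.{0} R) ℤ, IsTotallyAcyclicWrt 𝓣 C ∧
    ∃ n : ℤ, Nonempty (M ≅ kernel (C.d n (n - 1)))

/-- `M` is strongly Gorenstein `(𝓛,𝓐)`-projective. -/
def IsSGProj (𝓣 : Set (ModuleCat.{0} R)) (M : ModuleCat.{0} R) : Prop :=
  ∃ (P : ModuleCat.{0} R) (f : P ⟶ P), Projective P ∧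
    (∃ w : f ≫ f = 0, (ShortComplex.mk f f w).Exact) ∧
    (∀ T ∈ 𝓣, ∀ g : P ⟶ T, f ≫ g = 0 → ∃ h : P ⟶ T, f ≫ h = g) ∧
    Nonempty (M ≅ kernel f)

/-- Resolution dimension of `M` with respect to a class `𝓒` is at most `n`. -/
def ResDimLE (𝓒 : Set (ModuleCat.{0} R)) : ℕ → ModuleCat.{0} R → Prop
  | 0, M => M ∈ 𝓒
  | n + 1, M => ∃ (K C : ModuleCat.{0} R) (f : K ⟶ C) (g : C ⟶ M),
      C ∈ 𝓒 ∧ SES f g ∧ ResDimLE 𝓒 n K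

/-- `K` is an `n`-th kernel of an exact sequence `0 → K → C_{n-1} → ⋯ → C₀ → M → 0`
with all `Cᵢ` in `𝓒`. -/
def IsNthSyzygy (𝓒 : Set (ModuleCat.{0} R)) : ℕ → ModuleCat.{0} R → ModuleCat.{0} R → Prop
  | 0, M, K => Nonempty (K ≅ M)
  | n + 1, M, K => ∃ (S C : ModuleCat.{0} R) (f : S ⟶ C) (g : C ⟶ M),
      C ∈ 𝓒 ∧ SES f g ∧ IsNthSyzygy 𝓒 n S K

/-- A left Frobenius pair `(𝓧, ω)`. -/
structure LeftFrobeniusPair (𝓧 ω : Set (ModuleCat.{0} R)) : Prop where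
  summands_X : ∀ X ∈ 𝓧, ∀ (Y : ModuleCat.{0} R) (i : Y ⟶ X) (p : X ⟶ Y),
    i ≫ p = 𝟙 Y → Y ∈ 𝓧
  extensions_X : ∀ {A B C : ModuleCat.{0} R} (f : A ⟶ B) (g : B ⟶ C),
    SES f g → A ∈ 𝓧 → C ∈ 𝓧 → B ∈ 𝓧
  kerEpi_X : ∀ {A B C : ModuleCat.{0} R} (f : A ⟶ B) (g : B ⟶ C),
    SES f g → B ∈ 𝓧 → C ∈ 𝓧 → A ∈ 𝓧
  subset : ω ⊆ 𝓧
  inj : ∀ X ∈ 𝓧, ∀ W ∈ ω, ∀ i : ℕ, 1 ≤ i → ExtVanish i X W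
  cogen : ∀ X ∈ 𝓧, ∃ (W X' : ModuleCat.{0} R) (f : X ⟶ W) (g : W ⟶ X'),
    W ∈ ω ∧ X' ∈ 𝓧 ∧ SES f g
  summands_ω : ∀ W ∈ ω, ∀ (V : ModuleCat.{0} R) (i : V ⟶ W) (p : W ⟶ V),
    i ≫ p = 𝟙 V → V ∈ ω


/-! ### Short exact sequences of modules, elementwise -/

lemma ses_iff {A B C : ModuleCat.{0} R} (f : A ⟶ B) (g : B ⟶ C) :
    SES f g ↔ Function.Injective f.hom ∧ Function.Exact f.hom g.hom ∧
      Function.Surjective g.hom := by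
  constructor
  · rintro ⟨w, h⟩
    exact ⟨h.moduleCat_injective_f,
      (ShortComplex.ShortExact.moduleCat_exact_iff_function_exact _).mp h.exact,
      h.moduleCat_surjective_g⟩
  · rintro ⟨h1, h2, h3⟩
    have w : f ≫ g = 0 := by
      ext x
      exact h2.apply_apply_eq_zero x
    refine ⟨w, ?_⟩
    have : Mono f := (ModuleCat.mono_iff_injective f).mpr h1
    have : Epi g := (ModuleCat.epi_iff_surjective g).mpr h3
    exact ⟨(ShortComplex.ShortExact.moduleCat_exact_iff_function_exact _).mpr h2⟩

lemma hom_congr {A B : ModuleCat.{0} R} {f g : A ⟶ B} (h : f = g) (x : A) :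
    f.hom x = g.hom x := by rw [h]

lemma exists_desc {A B C T : ModuleCat.{0} R} {f : A ⟶ B} {g : B ⟶ C}
    (hfg : Function.Exact f.hom g.hom) (hg : Function.Surjective g.hom)
    (φ : B ⟶ T) (h : f ≫ φ = 0) : ∃ ψ : C ⟶ T, g ≫ ψ = φ := by
  have w : f ≫ g = 0 := by
    ext x
    exact hfg.apply_apply_eq_zero x
  have : Epi g := (ModuleCat.epi_iff_surjective g).mpr hg
  have hS : (ShortComplex.mk f g w).Exact :=
    (ShortComplex.ShortExact.moduleCat_exact_iff_function_exact _).mpr hfg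
  have : Epi (ShortComplex.mk f g w).g := this
  exact ⟨hS.desc φ h, hS.g_desc φ h⟩

lemma exists_lift {A B C T : ModuleCat.{0} R} {f : A ⟶ B} {g : B ⟶ C}
    (hf : Function.Injective f.hom) (hfg : Function.Exact f.hom g.hom)
    (φ : T ⟶ B) (h : φ ≫ g = 0) : ∃ ψ : T ⟶ A, ψ ≫ f = φ := by
  have w : f ≫ g = 0 := by
    ext x
    exact hfg.apply_apply_eq_zero x
  have : Mono f := (ModuleCat.mono_iff_injective f).mpr hf
  have hS : (ShortComplex.mk f g w).Exact :=
    (ShortComplex.ShortExact.moduleCat_exact_iff_function_exact _).mpr hfg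
  have : Mono (ShortComplex.mk f g w).f := this
  exact ⟨hS.lift φ h, hS.lift_f φ h⟩

lemma ses_kernel {B C : ModuleCat.{0} R} (g : B ⟶ C) (hg : Function.Surjective g.hom) :
    SES (ModuleCat.ofHom (LinearMap.ker g.hom).subtype) g := by
  rw [ses_iff]
  refine ⟨Subtype.val_injective, fun x => ?_, hg⟩
  constructor
  · intro h
    exact ⟨⟨x, h⟩, rfl⟩
  · rintro ⟨y, rfl⟩
    exact y.2

lemma ses_cokernel {A B : ModuleCat.{0} R} (f : A ⟶ B) (hf : Function.Injective f.hom) :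
    SES f (ModuleCat.ofHom (LinearMap.range f.hom).mkQ) := by
  rw [ses_iff]
  refine ⟨hf, fun x => ?_, Submodule.mkQ_surjective _⟩
  simp [Submodule.Quotient.mk_eq_zero]

/-- The third isomorphism theorem for a chain `A ⊆ B ⊆ P`: the quotient `D = P / A` is an
extension of `P / B` by `B / A`. -/
lemma ses_comp {A B C P B' : ModuleCat.{0} R} {i : A ⟶ B} {p : B ⟶ C} {j : B ⟶ P} {q : P ⟶ B'}
    (h1 : SES i p) (h2 : SES j q) :
    ∃ (D : ModuleCat.{0} R) (a : P ⟶ D) (b : C ⟶ D) (c : D ⟶ B'),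
      SES (i ≫ j) a ∧ SES b c ∧ a ≫ c = q := by
  rw [ses_iff] at h1 h2
  obtain ⟨hi, hip, hp⟩ := h1
  obtain ⟨hj, hjq, hq⟩ := h2
  have hinj : Function.Injective (i ≫ j).hom := by
    simpa using hj.comp hi
  have hD := ses_cokernel (i ≫ j) hinj
  generalize ModuleCat.ofHom (LinearMap.range (i ≫ j).hom).mkQ = a at hD
  have hD' := (ses_iff _ _).mp hD
  obtain ⟨-, ha, has⟩ := hD'
  obtain ⟨b, hb⟩ := exists_desc hip hp (j ≫ a) (by
    ext x
    exact ha.apply_apply_eq_zero x)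
  obtain ⟨c, hc⟩ := exists_desc ha has q (by
    ext x
    exact hjq.apply_apply_eq_zero (i.hom x))
  have hb' : ∀ x, b.hom (p.hom x) = a.hom (j.hom x) := fun x => hom_congr hb x
  have hc' : ∀ x, c.hom (a.hom x) = q.hom x := fun x => hom_congr hc x
  refine ⟨_, a, b, c, hD, (ses_iff _ _).mpr ⟨?_, ?_, ?_⟩, hc⟩
  · rw [injective_iff_map_eq_zero]
    intro x hx
    obtain ⟨y, rfl⟩ := hp x
    rw [hb'] at hx
    obtain ⟨z, hz⟩ := (ha _).mp hx
    have : i.hom z = y := hj hz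
    rw [← this]
    exact hip.apply_apply_eq_zero z
  · intro x
    obtain ⟨y, rfl⟩ := has x
    rw [hc']
    constructor
    · intro h
      obtain ⟨z, rfl⟩ := (hjq _).mp h
      exact ⟨p.hom z, hb' z⟩
    · rintro ⟨z, hz⟩
      obtain ⟨w, rfl⟩ := hp z
      rw [← hc', ← hz, hb', hc']
      exact hjq.apply_apply_eq_zero w
  · intro x
    obtain ⟨y, rfl⟩ := hq x
    exact ⟨a.hom y, hc' y⟩

/-! ### Ext-orthogonality -/

/-- `M` lies in the left orthogonal of `𝓣`: `Extⁱ(M, T) = 0` for all `T ∈ 𝓣` and `i ≥ 1`, where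
`Ext` is the group of morphisms in the derived category. -/
def LeftOrth (𝓣 : Set (ModuleCat.{0} R)) (M : ModuleCat.{0} R) : Prop :=
  ∀ T ∈ 𝓣, ∀ (n : ℕ) (x : Abelian.Ext M T (n + 1)), x = 0

section

variable {𝓣 : Set (ModuleCat.{0} R)} {A B C : ModuleCat.{0} R} {f : A ⟶ B} {g : B ⟶ C}

lemma LeftOrth.middle (h : SES f g) (hA : LeftOrth 𝓣 A) (hC : LeftOrth 𝓣 C) :
    LeftOrth 𝓣 B := by
  obtain ⟨w, h⟩ := h
  intro T hT n x
  obtain ⟨y, rfl⟩ := Abelian.Ext.contravariant_sequence_exact₂ h T x (hA T hT n _)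
  rw [hC T hT n y, Abelian.Ext.comp_zero]

lemma LeftOrth.left (h : SES f g) (hB : LeftOrth 𝓣 B) (hC : LeftOrth 𝓣 C) :
    LeftOrth 𝓣 A := by
  obtain ⟨w, h⟩ := h
  intro T hT n x
  obtain ⟨y, rfl⟩ := Abelian.Ext.contravariant_sequence_exact₁ h T x
    (n₁ := n + 1 + 1) (add_comm _ _) (hC T hT (n + 1) _)
  rw [hB T hT n y, Abelian.Ext.comp_zero]

lemma LeftOrth.retract (hB : LeftOrth 𝓣 B) (i : A ⟶ B) (p : B ⟶ A) (hip : i ≫ p = 𝟙 A) :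
    LeftOrth 𝓣 A := by
  intro T hT n x
  have h := Abelian.Ext.mk₀_comp_mk₀_assoc i p x
  rw [hB T hT n ((Abelian.Ext.mk₀ p).comp x (zero_add _)), hip, Abelian.Ext.mk₀_id_comp, Abelian.Ext.comp_zero] at h
  exact h.symm

lemma LeftOrth.of_projective [Projective A] : LeftOrth 𝓣 A :=
  fun _ _ _ x => Abelian.Ext.eq_zero_of_projective x

lemma LeftOrth.extend (hC : LeftOrth 𝓣 C) (h : SES f g) {T : ModuleCat.{0} R} (hT : T ∈ 𝓣)
    (φ : A ⟶ T) : ∃ ψ : B ⟶ T, f ≫ ψ = φ := by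
  obtain ⟨w, h⟩ := h
  obtain ⟨y, hy⟩ := Abelian.Ext.contravariant_sequence_exact₁ h T (Abelian.Ext.mk₀ φ)
    (n₁ := 1) rfl (hC T hT 0 _)
  obtain ⟨ψ, rfl⟩ := (Abelian.Ext.mk₀_bijective _ _).2 y
  refine ⟨ψ, (Abelian.Ext.mk₀_bijective _ _).1 ?_⟩
  rw [← hy, Abelian.Ext.mk₀_comp_mk₀]

/-- Dimension shifting: one projective presentation reduces orthogonality of `C` in degree `n + 1`
to an extension problem (`n = 0`) or to orthogonality of the syzygy `A` in degree `n`. -/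
lemma ext_zero_of_syzygy [Projective B] (h : SES f g) {T : ModuleCat.{0} R} (n : ℕ)
    (h0 : ∀ φ : A ⟶ T, ∃ ψ : B ⟶ T, f ≫ ψ = φ)
    (hA : ∀ m, n = m + 1 → ∀ x : Abelian.Ext A T (m + 1), x = 0)
    (x : Abelian.Ext C T (n + 1)) : x = 0 := by
  obtain ⟨w, h⟩ := h
  obtain ⟨y, rfl⟩ := Abelian.Ext.contravariant_sequence_exact₃ h T x
    (by have : Projective (ShortComplex.mk f g w).X₂ := ‹Projective B›
        exact Abelian.Ext.eq_zero_of_projective _) (n₀ := n) (add_comm _ _)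
  cases n with
  | zero =>
    obtain ⟨φ, rfl⟩ := (Abelian.Ext.mk₀_bijective _ _).2 y
    obtain ⟨ψ, rfl⟩ := h0 φ
    rw [← Abelian.Ext.mk₀_comp_mk₀]
    exact h.extClass_comp_assoc _
  | succ m => rw [hA m rfl y, Abelian.Ext.comp_zero]

end

/-! ### The coinductive description of Gorenstein projectives -/

/-- A class `S` is costable if each of its members is left orthogonal to `𝓣` and embeds into a
projective module with cokernel again in `S`. -/
def CoStable (𝓣 S : Set (ModuleCat.{0} R)) : Prop :=
  ∀ M ∈ S, LeftOrth 𝓣 M ∧ ∃ (P M' : ModuleCat.{0} R) (f : M ⟶ P) (g : P ⟶ M'),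
    Projective P ∧ M' ∈ S ∧ SES f g

/-- The largest costable class: the modules left orthogonal to `𝓣` having a coresolution by
projectives whose cosyzygies are all left orthogonal to `𝓣`. -/
def GClass (𝓣 : Set (ModuleCat.{0} R)) : Set (ModuleCat.{0} R) :=
  {M | ∃ S, CoStable 𝓣 S ∧ M ∈ S}

section

variable {𝓣 : Set (ModuleCat.{0} R)} {A B C : ModuleCat.{0} R} {f : A ⟶ B} {g : B ⟶ C}

lemma gclass_coStable : CoStable 𝓣 (GClass 𝓣) := by
  rintro M ⟨S, hS, hM⟩
  obtain ⟨h1, P, M', f, g, hP, hM', h⟩ := hS M hM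
  exact ⟨h1, P, M', f, g, hP, ⟨S, hS, hM'⟩, h⟩

lemma mem_gclass_of_step (hA : LeftOrth 𝓣 A) (hB : Projective B) (hC : C ∈ GClass 𝓣)
    (h : SES f g) : A ∈ GClass 𝓣 := by
  refine ⟨insert A (GClass 𝓣), ?_, Or.inl rfl⟩
  rintro M (rfl | hM)
  · exact ⟨hA, B, C, f, g, hB, Or.inr hC, h⟩
  · obtain ⟨h1, P, M', f, g, hP, hM', h⟩ := gclass_coStable M hM
    exact ⟨h1, P, M', f, g, hP, Or.inr hM', h⟩

lemma gclass_of_projective (hA : Projective A) : A ∈ GClass 𝓣 := by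
  refine ⟨{P | Projective P}, ?_, hA⟩
  intro P (hP : Projective P)
  refine ⟨LeftOrth.of_projective, P, ModuleCat.of R PUnit, 𝟙 P, 0, hP, ?_, ?_⟩
  · exact (IsProjective.iff_projective PUnit).mp inferInstance
  · rw [ses_iff]
    exact ⟨fun _ _ h => h, fun x => ⟨fun _ => ⟨x, rfl⟩, fun _ => rfl⟩,
      fun y => ⟨0, Subsingleton.elim _ _⟩⟩

lemma gclass_syzygy (h : SES f g) (hB : Projective B) (hC : C ∈ GClass 𝓣) : A ∈ GClass 𝓣 :=
  mem_gclass_of_step (LeftOrth.left h LeftOrth.of_projective (gclass_coStable C hC).1) hB hC h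

/-- The dual horseshoe construction: if the sub and the quotient of `0 → A → B → C → 0` embed into
projectives with cokernels `A'`, `C'`, then `B` embeds into a projective with cokernel an extension
of `C'` by `A'`. -/
lemma horseshoe (h : SES f g) {P A' Q C' : ModuleCat.{0} R} {j : A ⟶ P} {q : P ⟶ A'}
    {k : C ⟶ Q} {r : Q ⟶ C'} (h1 : SES j q) (h2 : SES k r) (hP : Projective P)
    (hQ : Projective Q) (hext : ∃ α : B ⟶ P, f ≫ α = j) :
    ∃ (X D : ModuleCat.{0} R) (β : B ⟶ X) (a : X ⟶ D) (b : A' ⟶ D) (c : D ⟶ C'),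
      Projective X ∧ SES β a ∧ SES b c := by
  obtain ⟨α, hα⟩ := hext
  rw [ses_iff] at h h1 h2
  obtain ⟨hf, hfg, hg⟩ := h
  obtain ⟨hj, hjq, hq⟩ := h1
  obtain ⟨hk, hkr, hr⟩ := h2
  have hα' : ∀ x, α.hom (f.hom x) = j.hom x := fun x => hom_congr hα x
  have hX : Projective (ModuleCat.of R (P × Q)) := by
    rw [← IsProjective.iff_projective]
    infer_instance
  have hβ : Function.Injective (LinearMap.prod α.hom (k.hom ∘ₗ g.hom)) := by
    rw [injective_iff_map_eq_zero]
    intro x hx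
    obtain ⟨hx1, hx2⟩ := Prod.ext_iff.mp hx
    have hx1 : α.hom x = 0 := hx1
    have hx2 : k.hom (g.hom x) = 0 := hx2
    obtain ⟨y, rfl⟩ := (hfg x).mp (hk (hx2.trans (map_zero _).symm))
    rw [hα'] at hx1
    rw [hj (hx1.trans (map_zero _).symm), map_zero]
  have hD := ses_cokernel (A := B) (B := ModuleCat.of R (P × Q))
    (ModuleCat.ofHom (LinearMap.prod α.hom (k.hom ∘ₗ g.hom))) hβ
  generalize ModuleCat.ofHom (LinearMap.range (ModuleCat.ofHom
    (LinearMap.prod α.hom (k.hom ∘ₗ g.hom))).hom).mkQ = a at hD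
  obtain ⟨-, ha, has⟩ := (ses_iff _ _).mp hD
  have ha0 : ∀ x : B, a.hom ((α.hom x, k.hom (g.hom x)) : P × Q) = 0 :=
    fun x => ha.apply_apply_eq_zero x
  obtain ⟨b, hb⟩ := exists_desc hjq hq (ModuleCat.ofHom (LinearMap.inl R P Q) ≫ a) (by
    ext x
    have := ha0 (f.hom x)
    rwa [hα', hfg.apply_apply_eq_zero, map_zero] at this)
  obtain ⟨c, hc⟩ := exists_desc ha has (ModuleCat.ofHom (LinearMap.snd R P Q) ≫ r) (by
    ext x
    exact hkr.apply_apply_eq_zero _)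
  have hb' : ∀ x : P, b.hom (q.hom x) = a.hom ((x, 0) : P × Q) := fun x => hom_congr hb x
  have hc' : ∀ x : P × Q, c.hom (a.hom x) = r.hom x.2 := fun x => hom_congr hc x
  refine ⟨_, _, _, a, b, c, hX, hD, (ses_iff _ _).mpr ⟨?_, ?_, ?_⟩⟩
  · rw [injective_iff_map_eq_zero]
    intro x hx
    obtain ⟨y, rfl⟩ := hq x
    rw [hb'] at hx
    obtain ⟨z, hz⟩ := (ha _).mp hx
    obtain ⟨hz1, hz2⟩ := Prod.ext_iff.mp hz
    have hz1 : α.hom z = y := hz1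
    have hz2 : k.hom (g.hom z) = 0 := hz2
    obtain ⟨w, rfl⟩ := (hfg z).mp (hk (hz2.trans (map_zero _).symm))
    rw [← hz1, hα']
    exact hjq.apply_apply_eq_zero w
  · intro x
    obtain ⟨⟨y, z⟩, rfl⟩ := has x
    constructor
    · intro h
      rw [hc'] at h
      obtain ⟨w, hw⟩ := (hkr _).mp h
      obtain ⟨v, rfl⟩ := hg w
      refine ⟨q.hom (y - α.hom v), ?_⟩
      rw [hb']
      have : ((y - α.hom v, 0) : P × Q) = (y, z) - (α.hom v, k.hom (g.hom v)) := by
        ext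
        · rfl
        · simp [hw]
      rw [this]
      exact (map_sub a.hom _ _).trans (by rw [ha0, sub_zero])
    · rintro ⟨w, hw⟩
      obtain ⟨v, rfl⟩ := hq w
      rw [← hw, hb', hc']
      exact map_zero _
  · intro x
    obtain ⟨y, rfl⟩ := hr x
    exact ⟨a.hom ((0, y) : P × Q), hc' _⟩

variable (h𝓣 : ∀ P : ModuleCat.{0} R, Projective P → P ∈ 𝓣)

include h𝓣 in
lemma gclass_extension (h : SES f g) (hA : A ∈ GClass 𝓣) (hC : C ∈ GClass 𝓣) :
    B ∈ GClass 𝓣 := by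
  refine ⟨{B | ∃ (A C : ModuleCat.{0} R) (f : A ⟶ B) (g : B ⟶ C),
    SES f g ∧ A ∈ GClass 𝓣 ∧ C ∈ GClass 𝓣}, ?_, A, C, f, g, h, hA, hC⟩
  rintro B ⟨A, C, f, g, h, hA, hC⟩
  obtain ⟨oA, P, A', j, q, hP, hA', h1⟩ := gclass_coStable A hA
  obtain ⟨oC, Q, C', k, r, hQ, hC', h2⟩ := gclass_coStable C hC
  obtain ⟨X, D, β, a, b, c, hX, hD, hbc⟩ :=
    horseshoe h h1 h2 hP hQ (oC.extend h (h𝓣 P hP) j)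
  exact ⟨LeftOrth.middle h oA oC, X, D, β, a, hX, ⟨A', C', b, c, hbc, hA', hC'⟩, hD⟩

include h𝓣 in
/-- For `B ⊆ P` with `P` projective, `P / A` is an extension of `P / B` by `C = B / A`, so `A` is a
syzygy of a member of the class. -/
lemma gclass_kernel (h : SES f g) (hB : B ∈ GClass 𝓣) (hC : C ∈ GClass 𝓣) :
    A ∈ GClass 𝓣 := by
  obtain ⟨oB, P, B', j, q, hP, hB', h1⟩ := gclass_coStable B hB
  obtain ⟨D, a, b, c, ha, hbc, -⟩ := ses_comp h h1
  exact gclass_syzygy ha hP (gclass_extension h𝓣 hbc hC hB')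

include h𝓣 in
/-- If `Y` is a retract of `X ⊆ P` and `D = P / Y`, then `D × Y` is an extension of `P / X` by `X`.
Hence retracts of members form a costable class. -/
lemma gclass_retract {X Y : ModuleCat.{0} R} (hX : X ∈ GClass 𝓣) (i : Y ⟶ X) (p : X ⟶ Y)
    (hip : i ≫ p = 𝟙 Y) : Y ∈ GClass 𝓣 := by
  refine ⟨{Y | ∃ X ∈ GClass 𝓣, ∃ (i : Y ⟶ X) (p : X ⟶ Y), i ≫ p = 𝟙 Y}, ?_, X, hX, i, p, hip⟩
  rintro Y ⟨X, hX, i, p, hip⟩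
  have hip' : ∀ y, p.hom (i.hom y) = y := fun y => hom_congr hip y
  have hi : Function.Injective i.hom := Function.LeftInverse.injective hip'
  obtain ⟨oX, P, X', j, q, hP, hX', h1⟩ := gclass_coStable X hX
  obtain ⟨D, a, b, c, ha, hbc, hac⟩ := ses_comp (ses_cokernel i hi) h1
  refine ⟨oX.retract i p hip, P, D, i ≫ j, a, hP, ?_, ha⟩
  obtain ⟨hj, hjq, hq⟩ := (ses_iff _ _).mp h1
  obtain ⟨-, ha2, has⟩ := (ses_iff _ _).mp ha
  have hac' : ∀ x, c.hom (a.hom x) = q.hom x := fun x => hom_congr hac x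
  have ha0 : ∀ y, a.hom (j.hom (i.hom y)) = 0 := fun y => ha2.apply_apply_eq_zero y
  have key : SES (A := X) (B := ModuleCat.of R (D × Y)) (C := X')
      (ModuleCat.ofHom (LinearMap.prod (a.hom ∘ₗ j.hom) p.hom))
      (ModuleCat.ofHom (c.hom ∘ₗ LinearMap.fst R D Y)) := by
    rw [ses_iff]
    refine ⟨?_, ?_, ?_⟩
    · rw [injective_iff_map_eq_zero]
      intro x hx
      obtain ⟨hx1, hx2⟩ := Prod.ext_iff.mp hx
      have hx1 : a.hom (j.hom x) = 0 := hx1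
      have hx2 : p.hom x = 0 := hx2
      obtain ⟨y, hy⟩ := (ha2 _).mp hx1
      have hy : i.hom y = x := hj hy
      rw [← hy, hip'] at hx2
      rw [← hy, hx2, map_zero]
    · rintro ⟨d, y⟩
      constructor
      · intro (h : c.hom d = 0)
        obtain ⟨z, rfl⟩ := has d
        rw [hac'] at h
        obtain ⟨x, rfl⟩ := (hjq _).mp h
        refine ⟨x + i.hom (y - p.hom x), Prod.ext ?_ ?_⟩
        · change a.hom (j.hom (x + i.hom (y - p.hom x))) = a.hom (j.hom x)
          rw [map_add, map_add, ha0, add_zero]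
        · change p.hom (x + i.hom (y - p.hom x)) = y
          rw [map_add, hip']
          abel
      · rintro ⟨x, hx⟩
        obtain ⟨hx1, -⟩ := Prod.ext_iff.mp hx
        have hx1 : a.hom (j.hom x) = d := hx1
        change c.hom d = 0
        rw [← hx1, hac']
        exact hjq.apply_apply_eq_zero x
    · intro x
      obtain ⟨z, rfl⟩ := hq x
      exact ⟨(a.hom z, 0), hac' z⟩
  exact ⟨_, gclass_extension h𝓣 key hX hX', ModuleCat.ofHom (LinearMap.inl R D Y),
    ModuleCat.ofHom (LinearMap.fst R D Y), rfl⟩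

end

/-! ### Comparison with totally acyclic complexes -/

section

variable {𝓣 : Set (ModuleCat.{0} R)}

lemma exact_d {C : ChainComplex (ModuleCat.{0} R) ℤ} (hC : ∀ n, (C.sc n).Exact) (i j k : ℤ)
    (hij : j + 1 = i) (hjk : k + 1 = j) : Function.Exact (C.d i j).hom (C.d j k).hom := by
  have h := (C.exactAt_iff' i j k (by rw [ChainComplex.prev, hij])
    (by rw [ChainComplex.next]; lia)).mp (hC j)
  exact (ShortComplex.ShortExact.moduleCat_exact_iff_function_exact _).mp h

/-- A module which is a kernel `ι` of the differential `C.d i j` sits in a short exact sequence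
with the term `C.X i` and the kernel of the next differential. -/
lemma ses_cycles {C : ChainComplex (ModuleCat.{0} R) ℤ} (hC : ∀ n, (C.sc n).Exact) (i j k : ℤ)
    (hij : j + 1 = i) (hjk : k + 1 = j) {M : ModuleCat.{0} R} (ι : M ⟶ C.X i)
    (hι : Function.Injective ι.hom) (hιd : Function.Exact ι.hom (C.d i j).hom)
    {N : ModuleCat.{0} R} (κ : N ⟶ C.X j)
    (hκ : Function.Injective κ.hom) (hκd : Function.Exact κ.hom (C.d j k).hom) :
    ∃ g : C.X i ⟶ N, g ≫ κ = C.d i j ∧ SES ι g := by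
  obtain ⟨g, hg⟩ := exists_lift hκ hκd (C.d i j) (C.d_comp_d i j k)
  have hg' : ∀ x, κ.hom (g.hom x) = (C.d i j).hom x := fun x => hom_congr hg x
  refine ⟨g, hg, (ses_iff _ _).mpr ⟨hι, fun x => ?_, fun y => ?_⟩⟩
  · rw [← hιd x, ← hg', map_eq_zero_iff _ hκ]
  · obtain ⟨x, hx⟩ := (exact_d hC i j k hij hjk (κ.hom y)).mp (hκd.apply_apply_eq_zero y)
    exact ⟨x, hκ ((hg' x).trans hx)⟩

lemma exact_kerSubtype {B C : ModuleCat.{0} R} (g : B ⟶ C) :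
    Function.Exact (ModuleCat.ofHom (LinearMap.ker g.hom).subtype).hom g.hom :=
  fun x => ⟨fun h => ⟨⟨x, h⟩, rfl⟩, by rintro ⟨y, rfl⟩; exact y.2⟩

/-- Kernels in a totally acyclic complex are left orthogonal to the test class, by dimension
shifting along the complex. -/
lemma leftOrth_cycles {C : ChainComplex (ModuleCat.{0} R) ℤ} (hC : IsTotallyAcyclicWrt 𝓣 C)
    {T : ModuleCat.{0} R} (hT : T ∈ 𝓣) (n : ℕ) :
    ∀ (i j : ℤ) (_ : j + 1 = i) (M : ModuleCat.{0} R) (ι : M ⟶ C.X i)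
      (_ : Function.Injective ι.hom) (_ : Function.Exact ι.hom (C.d i j).hom)
      (x : Abelian.Ext M T (n + 1)), x = 0 := by
  induction n with
  | zero =>
    intro i j hij M ι hι hιd x
    obtain ⟨g, hg, hS⟩ := ses_cycles hC.exact (i + 1) i j rfl hij _ Subtype.val_injective
      (exact_kerSubtype (C.d (i + 1) i)) ι hι hιd
    have := hC.projective (i + 1)
    refine ext_zero_of_syzygy hS 0 (fun φ => ?_) (fun m hm => by lia) x
    obtain ⟨g', hg', hS'⟩ := ses_cycles hC.exact (i + 1 + 1) (i + 1) i rfl rfl _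
      Subtype.val_injective (exact_kerSubtype (C.d (i + 1 + 1) (i + 1))) _ Subtype.val_injective
      (exact_kerSubtype (C.d (i + 1) i))
    obtain ⟨-, -, hs⟩ := (ses_iff _ _).mp hS'
    have hepi : Epi g' := (ModuleCat.epi_iff_surjective g').mpr hs
    have hom : ∀ (a b c : ℤ) (_ : b + 1 = a) (_ : c + 1 = b) (u : C.X a ⟶ T),
        C.d (a + 1) a ≫ u = 0 → ∃ v : C.X b ⟶ T, C.d a b ≫ v = u := by
      intro a b c hab hbc u hu
      obtain rfl : b = a - 1 := by lia
      exact hC.homExact T hT a u hu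
    obtain ⟨v, hv⟩ := hom (i + 1 + 1) (i + 1) i rfl rfl (g' ≫ φ) (by
      have : C.d (i + 1 + 1 + 1) (i + 1 + 1) ≫ g' = 0 := by
        ext x
        exact (hom_congr hg' _).trans (hom_congr (C.d_comp_d (i + 1 + 1 + 1) (i + 1 + 1) (i + 1)) x)
      rw [← Category.assoc, this, zero_comp])
    refine ⟨v, ?_⟩
    rw [← cancel_epi g', ← hv, ← hg', Category.assoc]
  | succ n ih =>
    intro i j hij M ι hι hιd x
    obtain ⟨g, hg, hS⟩ := ses_cycles hC.exact (i + 1) i j rfl hij _ Subtype.val_injective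
      (exact_kerSubtype (C.d (i + 1) i)) ι hι hιd
    have := hC.projective (i + 1)
    obtain ⟨w, hS⟩ := hS
    obtain ⟨y, rfl⟩ := Abelian.Ext.contravariant_sequence_exact₃ hS T x
      (by have : Projective (ShortComplex.mk _ _ w).X₂ := hC.projective (i + 1)
          exact Abelian.Ext.eq_zero_of_projective _) (n₀ := n + 1) (add_comm _ _)
    rw [ih (i + 1) i rfl _ _ Subtype.val_injective (exact_kerSubtype (C.d (i + 1) i)) y,
      Abelian.Ext.comp_zero]

lemma gclass_of_isGProj {M : ModuleCat.{0} R} (hM : IsGProj 𝓣 M) : M ∈ GClass 𝓣 := by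
  obtain ⟨C, hC, n, ⟨e⟩⟩ := hM
  refine ⟨{M | ∃ (i j : ℤ) (_ : j + 1 = i) (ι : M ⟶ C.X i), Function.Injective ι.hom ∧
    Function.Exact ι.hom (C.d i j).hom}, ?_, n, n - 1, by lia, e.hom ≫ kernel.ι _, ?_, ?_⟩
  · rintro M ⟨i, j, hij, ι, hι, hιd⟩
    refine ⟨fun T hT n x => leftOrth_cycles hC hT n i j hij M ι hι hιd x, ?_⟩
    obtain ⟨g, hg, hS⟩ := ses_cycles hC.exact i j (j - 1) hij (by lia) ι hι hιd
      _ Subtype.val_injective (exact_kerSubtype (C.d j (j - 1)))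
    exact ⟨_, _, ι, g, hC.projective i, ⟨j, j - 1, by lia, _, Subtype.val_injective,
      exact_kerSubtype (C.d j (j - 1))⟩, hS⟩
  · exact (ModuleCat.mono_iff_injective _).mp inferInstance
  · have h : (ShortComplex.mk (e.hom ≫ kernel.ι (C.d n (n - 1))) (C.d n (n - 1))
        (by simp)).Exact := by
      apply ShortComplex.exact_of_f_is_kernel
      exact IsLimit.ofIsoLimit (kernelIsKernel (C.d n (n - 1)))
        (Fork.ext e.symm (by simp))
    exact (ShortComplex.ShortExact.moduleCat_exact_iff_function_exact _).mp h

/-- A `ℤ`-indexed family of members of the class linked by short exact sequences with projective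
middle terms; the non-negative indices iterate a chosen syzygy, the negative ones a chosen
cosyzygy. -/
lemma exists_family {M : ModuleCat.{0} R} (hM : M ∈ GClass 𝓣) :
    ∃ Z : ℤ → ModuleCat.{0} R, Z 0 = M ∧ (∀ n, Z n ∈ GClass 𝓣) ∧
      ∀ n, ∃ (P : ModuleCat.{0} R) (f : Z (n + 1) ⟶ P) (g : P ⟶ Z n), Projective P ∧ SES f g := by
  let Rel (N' N : GClass 𝓣) : Prop := ∃ (P : ModuleCat.{0} R) (f : N'.1 ⟶ P) (g : P ⟶ N.1),
    Projective P ∧ SES f g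
  have hnext : ∀ N, ∃ N', Rel N N' := by
    rintro ⟨N, hN⟩
    obtain ⟨-, P, N', f, g, hP, hN', h⟩ := gclass_coStable N hN
    exact ⟨⟨N', hN'⟩, P, f, g, hP, h⟩
  have hprev : ∀ N, ∃ N', Rel N' N := by
    rintro ⟨N, hN⟩
    have hS := ses_kernel (Projective.π N) ((ModuleCat.epi_iff_surjective _).mp inferInstance)
    have hP : Projective (Projective.over N) := Projective.projective_over N
    exact ⟨⟨_, gclass_syzygy hS hP hN⟩, _, _, _, hP, hS⟩
  choose next hnext using hnext
  choose prev hprev using hprev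
  let Z : ℤ → GClass 𝓣 := fun n => match n with
    | Int.ofNat k => prev^[k] ⟨M, hM⟩
    | Int.negSucc k => next^[k + 1] ⟨M, hM⟩
  refine ⟨fun n => (Z n).1, rfl, fun n => (Z n).2, fun n => ?_⟩
  change Rel (Z (n + 1)) (Z n)
  match n with
  | Int.ofNat k =>
    have h : Z (Int.ofNat k + 1) = prev (Z (Int.ofNat k)) :=
      Function.iterate_succ_apply' prev k _
    rw [h]
    exact hprev _
  | Int.negSucc 0 => exact hnext ⟨M, hM⟩
  | Int.negSucc (k + 1) =>
    have h : Z (Int.negSucc (k + 1)) = next (Z (Int.negSucc k)) :=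
      Function.iterate_succ_apply' next (k + 1) _
    have h' : Int.negSucc (k + 1) + 1 = Int.negSucc k := by lia
    rw [h, h']
    exact hnext _

lemma isGProj_of_gclass {M : ModuleCat.{0} R} (hM : M ∈ GClass 𝓣) : IsGProj 𝓣 M := by
  obtain ⟨Z, rfl, hZ, hP⟩ := exists_family hM
  choose X f g hX hS using hP
  have hS' := fun n => (ses_iff _ _).mp (hS n)
  have hfg : ∀ n, f n ≫ g n = 0 := fun n => by
    ext x
    exact (hS' n).2.1.apply_apply_eq_zero x
  let C : ChainComplex (ModuleCat.{0} R) ℤ := ChainComplex.of X (fun n => g (n + 1) ≫ f n)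
    (fun n => by
      rw [Category.assoc, ← Category.assoc (f (n + 1)), hfg, zero_comp, comp_zero])
  have hd : ∀ n, C.d (n + 1) n = g (n + 1) ≫ f n := fun n => ChainComplex.of_d X (fun n => g (n + 1) ≫ f n) n
  have hker : ∀ i j, j + 1 = i → Function.Exact (f i).hom (C.d i j).hom := by
    rintro _ j rfl x
    rw [← (hS' (j + 1)).2.1 x, hd]
    exact map_eq_zero_iff (f j).hom (hS' j).1
  refine ⟨C, ⟨hX, fun n => ?_, fun T hT n u hu => ?_⟩, -1, ⟨?_⟩⟩
  · have h : C.ExactAt n := by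
      rw [C.exactAt_iff' (n + 1) n (n - 1) (by simp) (by simp)]
      refine (ShortComplex.ShortExact.moduleCat_exact_iff_function_exact _).mpr fun x => ?_
      change (C.d n (n - 1)).hom x = 0 ↔ x ∈ Set.range (C.d (n + 1) n).hom
      rw [hker n (n - 1) (by lia) x, hd]
      constructor
      · rintro ⟨y, rfl⟩
        obtain ⟨z, rfl⟩ := (hS' (n + 1)).2.2 y
        exact ⟨z, rfl⟩
      · rintro ⟨z, rfl⟩
        exact ⟨(g (n + 1)).hom z, rfl⟩
    exact h
  · obtain ⟨m, rfl⟩ : ∃ m, n = m + 1 := ⟨n - 1, by lia⟩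
    have key : ∀ k, k = m → ∃ h : C.X k ⟶ T, C.d (m + 1) k ≫ h = u := by
      rintro k rfl
      have : Epi (g (k + 1 + 1)) := (ModuleCat.epi_iff_surjective _).mpr (hS' _).2.2
      have hu' : f (k + 1) ≫ u = 0 := by
        rw [← cancel_epi (g (k + 1 + 1)), ← Category.assoc, ← hd, hu, comp_zero]
      obtain ⟨v, hv⟩ := exists_desc (hS' (k + 1)).2.1 (hS' (k + 1)).2.2 u hu'
      obtain ⟨w, hw⟩ := (gclass_coStable _ (hZ k)).1.extend (hS k) hT v
      exact ⟨w, by rw [hd, Category.assoc, hw, hv]⟩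
    exact key _ (by lia)
  · have h := hker (-1) (-1 - 1) (by lia)
    have w : f (-1) ≫ C.d (-1) (-1 - 1) = 0 := by
      ext x
      exact h.apply_apply_eq_zero x
    have : Mono (ShortComplex.mk (f (-1)) _ w).f :=
      (ModuleCat.mono_iff_injective _).mpr (hS' (-1)).1
    have hE : (ShortComplex.mk (f (-1)) _ w).Exact :=
      (ShortComplex.ShortExact.moduleCat_exact_iff_function_exact _).mpr h
    exact hE.fIsKernel.conePointUniqueUpToIso (limit.isLimit _)

lemma isGProj_eq_gclass : {G : ModuleCat.{0} R | IsGProj 𝓣 G} = GClass 𝓣 :=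
  Set.ext fun _ => ⟨gclass_of_isGProj, isGProj_of_gclass⟩

end

/-! ### Vanishing of derived-functor `Ext` -/

/-- `Extⁿ⁺¹(M, N)` vanishes iff, for a projective resolution `P` of `M`, every cocycle
`P_{n+1} → N` is a coboundary. -/
lemma extVanish_succ_iff {M : ModuleCat.{0} R} (P : ProjectiveResolution M) (n : ℕ)
    (N : ModuleCat.{0} R) :
    ExtVanish (n + 1) M N ↔ ∀ φ : P.complex.X (n + 1) ⟶ N,
      P.complex.d (n + 1 + 1) (n + 1) ≫ φ = 0 →
        ∃ ψ : P.complex.X n ⟶ N, P.complex.d (n + 1) n ≫ ψ = φ := by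
  have h1 : ExtVanish (n + 1) M N ↔ (P.complex.linearYonedaObj ℤ N).ExactAt (n + 1) := by
    rw [HomologicalComplex.exactAt_iff_isZero_homology,
      ← (P.isoExt (R := ℤ) (n + 1) N).isZero_iff]
    exact ModuleCat.isZero_iff_subsingleton.symm
  rw [h1, HomologicalComplex.exactAt_iff' _ n (n + 1) (n + 1 + 1) (by simp) (by simp),
    ShortComplex.moduleCat_exact_iff]
  exact Iff.rfl

section

variable {𝓣 : Set (ModuleCat.{0} R)}

/-- Each term of a projective resolution of a member of the class maps onto a member of the class,
with kernel the image of the next differential. -/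
lemma exists_syzygy {M : ModuleCat.{0} R} (hM : M ∈ GClass 𝓣) (P : ProjectiveResolution M)
    (n : ℕ) : ∃ N ∈ GClass 𝓣, ∃ π : P.complex.X n ⟶ N, Function.Surjective π.hom ∧
      Function.Exact (P.complex.d (n + 1) n).hom π.hom := by
  induction n with
  | zero =>
    exact ⟨M, hM, P.π.f 0, (ModuleCat.epi_iff_surjective (P.π.f 0)).mp inferInstance,
      (ShortComplex.ShortExact.moduleCat_exact_iff_function_exact _).mp P.exact₀⟩
  | succ n ih =>
    obtain ⟨N, hN, π, hπ, hd⟩ := ih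
    have hS := ses_kernel π hπ
    obtain ⟨hi, hx, -⟩ := (ses_iff _ _).mp hS
    obtain ⟨e, he⟩ := exists_lift hi hx (P.complex.d (n + 1) n) (by
      ext x
      exact hd.apply_apply_eq_zero x)
    have he' : ∀ x, (e.hom x).1 = (P.complex.d (n + 1) n).hom x := fun x => hom_congr he x
    refine ⟨_, gclass_syzygy hS (P.projective n) hN, e, fun y => ?_, fun x => ?_⟩
    · obtain ⟨x, hx⟩ := (hd y.1).mp y.2
      exact ⟨x, Subtype.ext ((he' x).trans hx)⟩
    · have h := (ShortComplex.ShortExact.moduleCat_exact_iff_function_exact _).mp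
        (P.exact_succ n) x
      refine Iff.trans ?_ h
      change e.hom x = 0 ↔ (P.complex.d (n + 1) n).hom x = 0
      rw [← he', Subtype.ext_iff]
      rfl

lemma extVanish_of_gclass {M : ModuleCat.{0} R} (hM : M ∈ GClass 𝓣) {T : ModuleCat.{0} R}
    (hT : T ∈ 𝓣) (n : ℕ) : ExtVanish (n + 1) M T := by
  let P := ProjectiveResolution.of M
  rw [extVanish_succ_iff P]
  intro φ hφ
  obtain ⟨N, hN, π, hπ, hd⟩ := exists_syzygy hM P n
  have hS := ses_kernel π hπ
  obtain ⟨hi, hx, -⟩ := (ses_iff _ _).mp hS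
  obtain ⟨e, he⟩ := exists_lift hi hx (P.complex.d (n + 1) n) (by
    ext x
    exact hd.apply_apply_eq_zero x)
  have he' : ∀ x, (e.hom x).1 = (P.complex.d (n + 1) n).hom x := fun x => hom_congr he x
  have hs : Function.Surjective e.hom := fun y => by
    obtain ⟨x, hx⟩ := (hd y.1).mp y.2
    exact ⟨x, Subtype.ext ((he' x).trans hx)⟩
  have hex : Function.Exact (P.complex.d (n + 1 + 1) (n + 1)).hom e.hom := fun x => by
    have h := (ShortComplex.ShortExact.moduleCat_exact_iff_function_exact _).mp
      (P.exact_succ n) x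
    refine Iff.trans ?_ h
    change e.hom x = 0 ↔ (P.complex.d (n + 1) n).hom x = 0
    rw [← he', Subtype.ext_iff]
    rfl
  obtain ⟨v, hv⟩ := exists_desc hex hs φ hφ
  obtain ⟨ψ, hψ⟩ := (gclass_coStable N hN).1.extend hS hT v
  exact ⟨ψ, by rw [← he, Category.assoc, hψ, hv]⟩

end

/-- Vanishing of the derived-functor `Ext¹(C, T)` lets maps `A → T` extend over `0 → A → B → C → 0`:
for a projective resolution `Q` of `C`, the module `B` is the pushout of `A` and `Q₀` under `Q₁`. -/
lemma extend_of_extVanish {A B C T : ModuleCat.{0} R} {f : A ⟶ B} {g : B ⟶ C} (h : SES f g)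
    (hCT : ExtVanish 1 C T) (φ : A ⟶ T) : ∃ ψ : B ⟶ T, f ≫ ψ = φ := by
  let Q := ProjectiveResolution.of C
  have hQ := (extVanish_succ_iff Q 0 T).mp hCT
  obtain ⟨hf, hfg, hg⟩ := (ses_iff _ _).mp h
  have hg' : Epi g := (ModuleCat.epi_iff_surjective g).mpr hg
  have hf' : Mono f := (ModuleCat.mono_iff_injective f).mpr hf
  have hQ0 : Projective (Q.complex.X 0) := Q.projective 0
  let π : Q.complex.X 0 ⟶ C := Q.π.f 0
  have hπ : Function.Exact (Q.complex.d 1 0).hom π.hom :=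
    (ShortComplex.ShortExact.moduleCat_exact_iff_function_exact _).mp Q.exact₀
  let l : Q.complex.X 0 ⟶ B := Projective.factorThru π g
  have hl : l ≫ g = π := Projective.factorThru_comp π g
  have hl' : ∀ x, g.hom (l.hom x) = π.hom x := fun x => hom_congr hl x
  obtain ⟨l', hl₁⟩ := exists_lift hf hfg (Q.complex.d 1 0 ≫ l) (by
    ext x
    exact (hl' _).trans (hπ.apply_apply_eq_zero x))
  have hl₁' : ∀ x, f.hom (l'.hom x) = l.hom ((Q.complex.d 1 0).hom x) :=
    fun x => hom_congr hl₁ x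
  obtain ⟨ψ, hψ⟩ := hQ (l' ≫ φ) (by
    have : Q.complex.d 2 1 ≫ l' = 0 := by
      rw [← cancel_mono f, Category.assoc, hl₁, ← Category.assoc, Q.complex.d_comp_d,
        zero_comp, zero_comp]
    rw [← Category.assoc, this, zero_comp])
  have hψ' : ∀ x, ψ.hom ((Q.complex.d 1 0).hom x) = φ.hom (l'.hom x) := fun x => hom_congr hψ x
  let s : ModuleCat.of R (A × Q.complex.X 0) ⟶ B :=
    ModuleCat.ofHom (LinearMap.coprod f.hom l.hom)
  let t : ModuleCat.of R (A × Q.complex.X 0) ⟶ T :=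
    ModuleCat.ofHom (LinearMap.coprod φ.hom ψ.hom)
  have hs : ∀ a q, s.hom ((a, q) : A × Q.complex.X 0) = f.hom a + l.hom q := fun _ _ => rfl
  have ht : ∀ a q, t.hom ((a, q) : A × Q.complex.X 0) = φ.hom a + ψ.hom q := fun _ _ => rfl
  have hs_surj : Function.Surjective s.hom := by
    intro b
    obtain ⟨q, hq⟩ := (ModuleCat.epi_iff_surjective (Q.π.f 0)).mp inferInstance (g.hom b)
    have hq : π.hom q = g.hom b := hq
    obtain ⟨a, ha⟩ := (hfg (b - l.hom q)).mp (by rw [map_sub, hl', hq, sub_self])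
    exact ⟨(a, q), by rw [hs, ha, sub_add_cancel]⟩
  obtain ⟨u, hu⟩ := exists_desc (exact_kerSubtype s) hs_surj t (by
    ext ⟨⟨a, q⟩, hx⟩
    have hx : f.hom a + l.hom q = 0 := hx
    change φ.hom a + ψ.hom q = 0
    have hq : π.hom q = 0 := by
      have := congrArg g.hom hx
      rwa [map_add, hfg.apply_apply_eq_zero, hl', zero_add, map_zero] at this
    obtain ⟨y, rfl⟩ := (hπ q).mp hq
    have ha : a + l'.hom y = 0 := by
      apply hf
      rw [map_add, hl₁', hx, map_zero]
    rw [hψ', ← map_add, ha, map_zero])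
  refine ⟨u, ?_⟩
  ext a
  have h1 : u.hom (s.hom ((a, 0) : A × Q.complex.X 0)) = t.hom ((a, 0) : A × Q.complex.X 0) :=
    hom_congr hu _
  rw [hs, ht, map_zero, map_zero, add_zero, add_zero] at h1
  exact h1

/-! ### Projective modules are flat and lie in the test class -/

/-- A projective module is flat: writing `s : M → ⨁_M R` for a section of the canonical surjection,
a map `g : X → M⁺` amounts to the family of characters `x ↦ g x p`, `p ∈ M`; these extend along
`X ⊆ Y` by divisibility of `ℚ/ℤ`, and are recombined through `s`. -/
lemma isFlatMod_of_projective {M : ModuleCat.{0} R} (hM : Projective M) : IsFlatMod M := by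
  have hM' : Module.Projective R M := inferInstance
  obtain ⟨s, hs⟩ := Module.projective_def'.mp hM'
  refine ⟨fun {X Y} g f hf => ?_⟩
  have hf' : Function.Injective f.hom := (ModuleCat.mono_iff_injective f).mp hf
  let G : X →ₗ[Rᵐᵒᵖ] (M →+ AddCircle (1 : ℚ)) := g.hom
  have hG : ∀ (r : R) (x : X) (m : M), G (MulOpposite.op r • x) m = G x (r • m) := by
    intro r x m
    rw [map_smul]
    rfl
  have hext : ∀ p : M, ∃ θ : Y →+ AddCircle (1 : ℚ), ∀ x, θ (f.hom x) = G x p := by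
    intro p
    obtain ⟨θ, hθ⟩ := (Module.Baer.of_divisible (AddCircle (1 : ℚ))).extension_property_addMonoidHom
      f.hom.toAddMonoidHom hf' ((AddMonoidHom.eval p).comp G.toAddMonoidHom)
    exact ⟨θ, fun x => DFunLike.congr_fun hθ x⟩
  choose θ hθ using hext
  let H (y : Y) : (M →₀ R) →+ AddCircle (1 : ℚ) := Finsupp.liftAddHom fun p =>
    AddMonoidHom.mk' (fun r : R => θ p (MulOpposite.op r • y)) fun a b => by
      rw [MulOpposite.op_add, add_smul, map_add]
  have hH : ∀ y p r, H y (Finsupp.single p r) = θ p (MulOpposite.op r • y) := fun y p r => by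
    simp [H]
  have hH_add : ∀ y z, H (y + z) = H y + H z := fun y z => by
    ext p r
    simp [hH]
  have hH_smul : ∀ (t : R) y v, H (MulOpposite.op t • y) v = H y (t • v) := fun t y v => by
    induction v using Finsupp.induction_linear with
    | zero => simp
    | add v w hv hw => rw [map_add, smul_add, map_add, hv, hw]
    | single p r =>
      rw [Finsupp.smul_single, hH, hH, smul_eq_mul, MulOpposite.op_mul, mul_smul]
  let h : Y →ₗ[Rᵐᵒᵖ] (M →+ AddCircle (1 : ℚ)) :=
    { toFun := fun y => (H y).comp s.toAddMonoidHom
      map_add' := fun y z => by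
        rw [hH_add]
        rfl
      map_smul' := fun t y => by
        refine AddMonoidHom.ext fun m => ?_
        change H (t • y) (s m) = H y (s (t.unop • m))
        rw [map_smul, ← hH_smul, MulOpposite.op_unop] }
  have key : ∀ x v, H (f.hom x) v = G x (Finsupp.linearCombination R id v) := fun x v => by
    induction v using Finsupp.induction_linear with
    | zero => simp
    | add v w hv hw => rw [map_add, map_add, map_add, hv, hw]
    | single p r =>
      rw [hH, ← map_smul, hθ, hG, Finsupp.linearCombination_single, id]
  refine ⟨ModuleCat.ofHom h, ?_⟩
  refine ModuleCat.hom_ext (LinearMap.ext fun x => AddMonoidHom.ext fun m => ?_)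
  change H (f.hom x) (s m) = G x m
  rw [key]
  exact congrArg _ (LinearMap.congr_fun hs m)

lemma projective_mem {𝓛 : Set (ModuleCat.{0} R)} {𝓐 : Set (ModuleCat.{0} Rᵐᵒᵖ)}
    (hdp : CompleteDualityPair 𝓛 𝓐) (P : ModuleCat.{0} R) (hP : Projective P) : P ∈ 𝓛 := by
  classical
  have hP' : Module.Projective R P := inferInstance
  obtain ⟨s, hs⟩ := Module.projective_def'.mp hP'
  let e : (P →₀ R) ≃ₗ[R] ⨁ _ : P, R := finsuppLEquivDirectSum R R P
  refine hdp.summands_L _ (hdp.coprod_L P (fun _ => ModuleCat.of R R) fun _ => hdp.self_mem) P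
    (ModuleCat.ofHom (e.toLinearMap ∘ₗ s))
    (ModuleCat.ofHom (Finsupp.linearCombination R id ∘ₗ e.symm.toLinearMap)) ?_
  refine ModuleCat.hom_ext (LinearMap.ext fun x => ?_)
  change Finsupp.linearCombination R id (e.symm (e (s x))) = x
  rw [e.symm_apply_apply]
  exact LinearMap.congr_fun hs x

theorem stmt12
    (R : Type) [Ring R] (𝓛 : Set (ModuleCat.{0} R)) (𝓐 : Set (ModuleCat.{0} Rᵐᵒᵖ))
    (hdp : CompleteDualityPair 𝓛 𝓐) :
    LeftFrobeniusPair {G : ModuleCat.{0} R | IsGProj 𝓛 G}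
        {F : ModuleCat.{0} R | IsFlatMod F} ↔
      (∀ F : ModuleCat.{0} R, IsFlatMod F → Projective F) := by
  rw [isGProj_eq_gclass]
  have h𝓛 := projective_mem hdp
  constructor
  · intro h F hF
    -- `F` embeds in a projective `P` with `P / F` in the class, and `Ext¹(P / F, F) = 0` splits
    -- this embedding.
    obtain ⟨-, P, F', f, g, hP, hF', hS⟩ := gclass_coStable F (h.subset hF)
    obtain ⟨r, hr⟩ := extend_of_extVanish hS (h.inj F' hF' F hF 1 le_rfl) (𝟙 F)
    exact (Retract.mk f r hr).projective
  · intro h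
    exact
      { summands_X := fun X hX Y i p hip => gclass_retract h𝓛 hX i p hip
        extensions_X := fun f g hS hA hC => gclass_extension h𝓛 hS hA hC
        kerEpi_X := fun f g hS hB hC => gclass_kernel h𝓛 hS hB hC
        subset := fun F hF => gclass_of_projective (h F hF)
        inj := fun X hX W hW i hi => by
          obtain ⟨n, rfl⟩ : ∃ n, i = n + 1 := ⟨i - 1, by lia⟩
          exact extVanish_of_gclass hX (h𝓛 W (h W hW)) n
        cogen := fun X hX => by
          obtain ⟨-, P, X', f, g, hP, hX', hS⟩ := gclass_coStable X hX
          exact ⟨P, X', f, g, isFlatMod_of_projective hP, hX', hS⟩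
        summands_ω := fun W hW V i p hip => by
          have := h W hW
          exact isFlatMod_of_projective (Retract.mk i p hip).projective }

end DualityPaper
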